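/- arXiv:1509.05701 — 2 statements merged into one kernel-verified Lean document; each statement's English description precedes it below -/
import Mathlib

section
/- Let Q be a compact Hausdorff topological space and let H be an infinite-dimensional complex Hilbert space. Then every 2-local derivation Δ on the algebra C(Q, B(H)) of continuous functions from Q into the algebra B(H) of bounded linear operators on H (with pointwise operations) is a derivation; in particular Δ is additive, complex-homogeneous, and satisfies Δ(xy) = Δ(x)y + xΔ(y) for all x, y. -/
/-!
The proof is by minimal idempotents. In a complex algebra `R`, call an idempotent `p` minimal if
`p a p ∈ ℂ p` for every `a`. If `p a p = c p`, applying a derivation and compressing by `p` gives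
`p D(a) p = -p (D(p) a + a D(p)) p`. The right-hand side only involves the values of `D` at `p`, so
a 2-local derivation `δ` satisfies the same identity, which is linear in `a`. When compressions by
minimal idempotents separate the points of `R` (as for `B(H)`, by rank-one projections), `δ` is
therefore linear. Being 2-local at the pairs `(a, a²)`, it is a Jordan derivation, and comparing the
Peirce corners gives `δ(a p) = δ(a) p + a δ(p)` for minimal `p`. Every `b p` is a linear
combination of two minimal idempotents, so `δ(a (b p)) = δ(a) (b p) + a δ(b p)`, and cancelling
`p` yields the Leibniz rule (`leibniz`).

To pass from `C(Q, B(H))` to `B(H)`, every derivation `D` of `C(Q, B(H))` is pointwise: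
`D(y)(q) = 0` whenever `y(q) = 0` (`deriv_apply_eq_zero`). For scalar functions this holds because
a function vanishing at `q` is a combination of squares of functions vanishing at `q`; the general
case follows by compressing with constant rank-one projections. Hence
`Δ(x)(q) = δ_q(x(q))`, where `δ_q(a) = Δ(const a)(q)` is a 2-local derivation of `B(H)`.
-/

namespace TwoLocal

section Algebra

variable {R : Type*} [Ring R] [Algebra ℂ R]

/-- An idempotent `p` whose corner `p R p` is contained in `ℂ p`. Zero is allowed. -/
def IsMinIdem (p : R) : Prop := p * p = p ∧ ∀ a, ∃ c : ℂ, p * a * p = c • p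

/-- The 2-local derivation property: any two values of `δ` are those of one derivation. -/
def IsTwoLocal (δ : R → R) : Prop :=
  ∀ x y, ∃ D : R →ₗ[ℂ] R, (∀ a b, D (a * b) = D a * b + a * D b) ∧ D x = δ x ∧ D y = δ y

/-- Compressions by minimal idempotents separate points. -/
def MinSeparating (R : Type*) [Ring R] [Algebra ℂ R] : Prop :=
  ∀ a : R, (∀ p : R, IsMinIdem p → p * a * p = 0) → a = 0

variable {δ : R → R}

lemma idem_rule (h : IsTwoLocal δ) {p : R} (hp : p * p = p) : δ p = δ p * p + p * δ p := by
  obtain ⟨D, hD, h1, -⟩ := h p p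
  have := hD p p
  rwa [hp, h1] at this

lemma corner_zero (h : IsTwoLocal δ) {p : R} (hp : p * p = p) : p * δ p * p = 0 := by
  have h1 := congrArg (fun t => p * t * p) (idem_rule h hp)
  have e : p * (δ p * p + p * δ p) * p = p * δ p * (p * p) + (p * p) * δ p * p := by noncomm_ring
  simp only [e, hp] at h1
  simpa using h1

/-- The compression of `δ a` by `p` depends on `a` linearly, with coefficients involving
only `δ p`. -/
lemma compression (h : IsTwoLocal δ) {p : R} (hp : IsMinIdem p) (a : R) :
    p * δ a * p = -(p * (δ p * a + a * δ p) * p) := by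
  obtain ⟨D, hD, h1, h2⟩ := h a p
  obtain ⟨c, hc⟩ := hp.2 a
  have h3 : D (p * a * p) = c • δ p := by rw [hc, map_smul, h2]
  rw [hD, hD, h1, h2] at h3
  have h4 := congrArg (fun t => p * t * p) h3
  have e : p * ((δ p * a + p * δ a) * p + p * a * δ p) * p
      = p * δ p * a * (p * p) + (p * p) * δ a * (p * p) + (p * p) * a * δ p * p := by noncomm_ring
  simp only [e, hp.1, mul_smul_comm, smul_mul_assoc, corner_zero h hp.1, smul_zero] at h4
  rw [eq_neg_iff_add_eq_zero, ← h4]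
  noncomm_ring

lemma map_add' (hs : MinSeparating R) (h : IsTwoLocal δ) (a b : R) :
    δ (a + b) = δ a + δ b := by
  rw [← sub_eq_zero]
  refine hs _ fun p hp => ?_
  have : p * (δ (a + b) - (δ a + δ b)) * p
      = p * δ (a + b) * p - p * δ a * p - p * δ b * p := by noncomm_ring
  rw [this, compression h hp, compression h hp, compression h hp]
  noncomm_ring

lemma map_smul' (h : IsTwoLocal δ) (c : ℂ) (a : R) : δ (c • a) = c • δ a := by
  obtain ⟨D, -, h1, h2⟩ := h a (c • a)
  rw [← h1, ← h2, map_smul]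

lemma jordan (hs : MinSeparating R) (h : IsTwoLocal δ) (a b : R) :
    δ (a * b) + δ (b * a) = δ a * b + a * δ b + δ b * a + b * δ a := by
  have sq : ∀ a, δ (a * a) = δ a * a + a * δ a := fun a => by
    obtain ⟨D, hD, h1, h2⟩ := h a (a * a)
    rw [← h2, hD, h1]
  have h1 := sq (a + b)
  have e : (a + b) * (a + b) = a * a + (a * b + b * a) + b * b := by noncomm_ring
  rw [e, map_add' hs h, map_add' hs h, map_add' hs h, map_add' hs h, sq, sq] at h1
  have h2 : δ (a * b) + δ (b * a) = (δ a * a + a * δ a + (δ (a * b) + δ (b * a))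
      + (δ b * b + b * δ b)) - (δ a * a + a * δ a) - (δ b * b + b * δ b) := by abel
  rw [h2, h1]
  noncomm_ring

/-- The Leibniz rule when the right factor is a minimal idempotent. The corners `p _ p`,
`p _ (1 - p)` and `(1 - p) _` come from `compression`, from `x p = (x p) p`, and from the
Jordan identity. -/
lemma leibniz_min (hs : MinSeparating R) (h : IsTwoLocal δ) {p : R} (hp : IsMinIdem p) (x : R) :
    δ (x * p) = δ x * p + x * δ p := by
  have pp := hp.1
  have id := idem_rule h pp
  have c0 := corner_zero h pp
  have hr : δ (x * p) = δ (x * p) * p + x * p * δ p := by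
    obtain ⟨D, hD, h1, h2⟩ := h (x * p) p
    have := hD (x * p) p
    rwa [mul_assoc, pp, h1, h2] at this
  have hl : δ (p * x) = δ p * (p * x) + p * δ (p * x) := by
    obtain ⟨D, hD, h1, h2⟩ := h (p * x) p
    have := hD p (p * x)
    rwa [← mul_assoc, pp, h1, h2] at this
  have hj := jordan hs h x p
  have k1 := compression h hp (x * p)
  have k2 := compression h hp x
  -- the part left of `p`, from its corners `p _ p` and `p _ (1 - p)`
  have top : p * δ (x * p) = p * (δ x * p + x * δ p) := by
    have e1 : p * (δ p * (x * p) + x * p * δ p) * p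
        = p * δ p * x * (p * p) + p * x * (p * δ p * p) := by noncomm_ring
    rw [e1, pp, c0, mul_zero, add_zero] at k1
    have e2 : p * δ (x * p) = p * δ (x * p) * p + p * x * (p * δ p) := by
      conv_lhs => rw [hr]
      noncomm_ring
    have e3 : p * (δ x * p + x * δ p) = p * δ x * p + p * x * δ p := by noncomm_ring
    rw [e2, k1, e3, k2]
    have e4 : p * x * δ p = p * x * (δ p * p + p * δ p) := by rw [← id]
    rw [e4]
    noncomm_ring
  -- the Jordan identity, with `δ (p x)` eliminated modulo `p`
  have bot : δ (x * p) - p * δ (x * p)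
      = (δ x * p + x * δ p) - p * (δ x * p + x * δ p) := by
    have f1 : δ (x * p) = δ x * p + x * δ p + δ p * x + p * δ x - δ (p * x) := by
      rw [← hj]; abel
    have f2 : p * δ (p * x) = δ (p * x) - δ p * (p * x) := by
      conv_rhs => rw [hl]
      noncomm_ring
    have f3 : p * (δ x * p + x * δ p + δ p * x + p * δ x - δ (p * x))
        = p * (δ x * p + x * δ p) + p * δ p * x + (p * p) * δ x - p * δ (p * x) := by noncomm_ring
    have f4 : δ p * x = (δ p * p + p * δ p) * x := by rw [← id]
    rw [f1, f3, f2, pp, f4]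
    noncomm_ring
  rw [top] at bot
  exact sub_left_injective bot

lemma isMinIdem_of_mul {p a : R} (hp : IsMinIdem p) (ha : p * a * p = p) :
    IsMinIdem (a * p) := by
  refine ⟨by rw [show a * p * (a * p) = a * (p * a * p) by noncomm_ring, ha], fun b => ?_⟩
  obtain ⟨c, hc⟩ := hp.2 (b * a)
  exact ⟨c, by rw [show a * p * b * (a * p) = a * (p * (b * a) * p) by noncomm_ring, hc,
    mul_smul_comm]⟩

lemma leibniz (hs : MinSeparating R) (h : IsTwoLocal δ) (x y : R) :
    δ (x * y) = δ x * y + x * δ y := by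
  rw [← sub_eq_zero]
  refine hs _ fun p hp => ?_
  -- `y p` is the minimal idempotent `(y + (1 - c)) p` minus a multiple of `p`
  obtain ⟨c, hc⟩ := hp.2 y
  have hE : IsMinIdem ((y + (1 - c) • 1) * p) := by
    refine isMinIdem_of_mul hp ?_
    rw [mul_add, add_mul, hc, mul_smul_comm, smul_mul_assoc, mul_one, hp.1, ← add_smul]
    simp
  set E := (y + (1 - c) • 1) * p with hEdef
  have hy : y * p = E + (c - 1) • p := by
    rw [hEdef, add_mul, smul_mul_assoc, one_mul, add_assoc, ← add_smul]
    simp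
  clear_value E
  have h1 : δ (x * (y * p)) = δ x * (y * p) + x * δ (y * p) := by
    rw [hy, mul_add, mul_smul_comm, map_add' hs h, map_smul' h, leibniz_min hs h hE,
      leibniz_min hs h hp, map_add' hs h, map_smul' h, mul_add, mul_add, mul_smul_comm,
      mul_smul_comm, smul_add]
    abel
  rw [← mul_assoc, leibniz_min hs h hp, leibniz_min hs h hp] at h1
  have h2 : (δ (x * y) - (δ x * y + x * δ y)) * p = 0 := by
    have : (δ (x * y) - (δ x * y + x * δ y)) * p
      = (δ (x * y) * p + x * y * δ p)
        - (δ x * (y * p) + x * (δ y * p + y * δ p)) := by noncomm_ring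
    rw [this, h1, sub_self]
  rw [mul_assoc, h2, mul_zero]

end Algebra

section Operators

variable {H : Type*} [NormedAddCommGroup H] [InnerProductSpace ℂ H]

/-- The rank-one operator `w ↦ ⟪u, w⟫ u`. -/
noncomputable def proj (u : H) : H →L[ℂ] H := (innerSL ℂ u).smulRight u

lemma proj_apply (u w : H) : proj u w = inner ℂ u w • u := rfl

lemma proj_mul_mul (u : H) (T : H →L[ℂ] H) :
    proj u * T * proj u = inner ℂ u (T u) • proj u := by
  ext w
  simp [proj_apply, smul_smul, mul_comm]

lemma isMinIdem_proj {u : H} (hu : ‖u‖ = 1) : IsMinIdem (proj u) := by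
  refine ⟨?_, fun T => ⟨_, proj_mul_mul u T⟩⟩
  have := proj_mul_mul u 1
  simpa [inner_self_eq_norm_sq_to_K, hu] using this

/-- Vanishing compressions by rank-one projections mean a vanishing numerical range. -/
lemma eq_zero_of_proj (T : H →L[ℂ] H)
    (hT : ∀ u : H, ‖u‖ = 1 → proj u * T * proj u = 0) : T = 0 := by
  have key : ∀ u : H, ‖u‖ = 1 → inner ℂ u (T u) = 0 := fun u hu => by
    have h1 := congrArg (fun S : H →L[ℂ] H => S u) (hT u hu)
    have hu0 : u ≠ 0 := fun h => by simp [h] at hu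
    simpa [proj_mul_mul, proj_apply, hu, hu0] using h1
  have : (T : H →ₗ[ℂ] H) = 0 := by
    rw [← inner_map_self_eq_zero]
    intro v
    by_cases hv : v = 0
    · simp [hv]
    have h1 := key (((‖v‖⁻¹ : ℝ) : ℂ) • v) (by simp [norm_smul, hv])
    rw [map_smul, inner_smul_left, inner_smul_right] at h1
    have h2 : inner ℂ v (T v) = 0 := by simpa [hv] using h1
    rw [← inner_conj_symm]
    simp [h2]
  ext w
  exact congrArg (fun S : H →ₗ[ℂ] H => S w) this

lemma minSeparating : MinSeparating (H →L[ℂ] H) :=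
  fun T hT => eq_zero_of_proj T fun _ hu => hT _ (isMinIdem_proj hu)

variable {Q : Type*} [TopologicalSpace Q]

/-- The function `x ↦ f(x) • 1` in the centre of `C(Q, B(H))`. -/
noncomputable def scalar (f : C(Q, ℂ)) : C(Q, H →L[ℂ] H) := ⟨fun x => f x • 1, by fun_prop⟩

/-- The square root of the positive part of a real function, as a complex function. -/
noncomputable def rootPos (g : C(Q, ℝ)) : C(Q, ℂ) :=
  ⟨fun x => (Real.sqrt (g x) : ℂ), by fun_prop⟩

/-- A scalar function vanishing at `q` is a combination of four squares of functions vanishing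
at `q`, namely of the roots of the positive and negative parts of its real and imaginary parts. -/
lemma deriv_scalar (D : C(Q, H →L[ℂ] H) →ₗ[ℂ] C(Q, H →L[ℂ] H))
    (hD : ∀ a b, D (a * b) = D a * b + a * D b) (f : C(Q, ℂ)) (q : Q) (hf : f q = 0) :
    D (scalar f) q = 0 := by
  let re : C(Q, ℝ) := ⟨fun x => (f x).re, by fun_prop⟩
  let im : C(Q, ℝ) := ⟨fun x => (f x).im, by fun_prop⟩
  let S : C(Q, ℝ) → C(Q, H →L[ℂ] H) := fun g => scalar (rootPos g)
  have hS : ∀ g : C(Q, ℝ), g q = 0 → D (S g * S g) q = 0 := fun g hg => by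
    have : S g q = 0 := by simp [S, scalar, rootPos, hg]
    rw [hD]
    simp [this]
  -- `Real.sqrt` vanishes on negative numbers, so `√t² - √(-t)² = t`
  have hsq : ∀ t : ℝ, ((Real.sqrt t : ℂ) * Real.sqrt t - Real.sqrt (-t) * Real.sqrt (-t)) = t := by
    intro t
    norm_cast
    rcases le_total 0 t with ht | ht
    · rw [Real.mul_self_sqrt ht, Real.sqrt_eq_zero_of_nonpos (by linarith : -t ≤ 0)]
      simp
    · rw [Real.mul_self_sqrt (by linarith : 0 ≤ -t), Real.sqrt_eq_zero_of_nonpos ht]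
      simp
  have hdec : (scalar f : C(Q, H →L[ℂ] H)) = (S re * S re - S (-re) * S (-re))
      + Complex.I • (S im * S im - S (-im) * S (-im)) := by
    ext1 x
    have h1 := hsq (f x).re
    have h2 := hsq (f x).im
    simp only [S, scalar, rootPos, re, im, ContinuousMap.coe_mk, ContinuousMap.add_apply,
      ContinuousMap.sub_apply, ContinuousMap.mul_apply, ContinuousMap.smul_apply,
      ContinuousMap.neg_apply, smul_mul_smul_comm, mul_one, ← sub_smul, smul_smul, ← add_smul,
      h1, h2]
    rw [mul_comm, Complex.re_add_im]
  have r0 : re q = 0 := by simp [re, hf]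
  have i0 : im q = 0 := by simp [im, hf]
  rw [hdec, map_add, map_smul, map_sub, map_sub, ContinuousMap.add_apply,
    ContinuousMap.smul_apply, ContinuousMap.sub_apply, ContinuousMap.sub_apply, hS re r0, hS im i0,
    hS (-re) (by rw [ContinuousMap.neg_apply, r0, neg_zero]),
    hS (-im) (by rw [ContinuousMap.neg_apply, i0, neg_zero]), sub_self, smul_zero, add_zero]

/-- Derivations of `C(Q, B(H))` act pointwise: for a constant rank-one projection `P`, the
compression `P y P` is `f P` with `f` a scalar function vanishing where `y` does. -/
lemma deriv_apply_eq_zero (D : C(Q, H →L[ℂ] H) →ₗ[ℂ] C(Q, H →L[ℂ] H))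
    (hD : ∀ a b, D (a * b) = D a * b + a * D b) (y : C(Q, H →L[ℂ] H)) (q : Q) (hy : y q = 0) :
    D y q = 0 := by
  refine eq_zero_of_proj _ fun u hu => ?_
  let P : C(Q, H →L[ℂ] H) := ContinuousMap.const Q (proj u)
  let f : C(Q, ℂ) := ⟨fun x => inner ℂ u (y x u), by fun_prop⟩
  have hf : f q = 0 := by simp [f, hy]
  have e : P * y * P = scalar f * P := by
    ext1 x
    simp [P, f, scalar, proj_mul_mul]
  have h1 := congrArg (fun z => (D z) q) e
  have hsq : (scalar f : C(Q, H →L[ℂ] H)) q = 0 := by simp [scalar, hf]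
  simp only [hD, ContinuousMap.add_apply, ContinuousMap.mul_apply, hy, hsq,
    deriv_scalar D hD f q hf] at h1
  simpa [P] using h1

end Operators

end TwoLocal

open TwoLocal in
/-- **Theorem 1 (complex case).** Every 2-local derivation on the algebra
`C(Q, B(H))` of continuous `B(H)`-valued functions on a compact Hausdorff
space `Q`, where `H` is an infinite-dimensional complex Hilbert space, is a
derivation: it is additive, complex-homogeneous, and satisfies the Leibniz
identity. -/
theorem two_local_derivation_on_continuous_BH_valued_functions_is_derivation
    (Q : Type*) [TopologicalSpace Q] [CompactSpace Q] [T2Space Q]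
    (H : Type*) [NormedAddCommGroup H] [InnerProductSpace ℂ H] [CompleteSpace H]
    (hH : ¬ FiniteDimensional ℂ H)
    (Δ : C(Q, H →L[ℂ] H) → C(Q, H →L[ℂ] H))
    (h2local : ∀ x y : C(Q, H →L[ℂ] H),
      ∃ D : C(Q, H →L[ℂ] H) →ₗ[ℂ] C(Q, H →L[ℂ] H),
        (∀ a b, D (a * b) = D a * b + a * D b) ∧ D x = Δ x ∧ D y = Δ y) :
    (∀ x y, Δ (x + y) = Δ x + Δ y) ∧
    (∀ (c : ℂ) (x), Δ (c • x) = c • Δ x) ∧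
    (∀ x y, Δ (x * y) = Δ x * y + x * Δ y) := by
  let δ : Q → (H →L[ℂ] H) → (H →L[ℂ] H) := fun q a => Δ (ContinuousMap.const Q a) q
  have hδ : ∀ q, IsTwoLocal (δ q) := fun q a b => by
    obtain ⟨D, hD, h1, h2⟩ := h2local (ContinuousMap.const Q a) (ContinuousMap.const Q b)
    refine ⟨{ toFun := fun c => D (ContinuousMap.const Q c) q
              map_add' := fun c d => ?_
              map_smul' := fun c d => ?_ }, fun c d => ?_, ?_, ?_⟩
    · rw [show ContinuousMap.const Q (c + d)
        = ContinuousMap.const Q c + ContinuousMap.const Q d from rfl, map_add]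
      rfl
    · rw [show ContinuousMap.const Q (c • d) = c • ContinuousMap.const Q d from rfl, map_smul]
      rfl
    · change D (ContinuousMap.const Q c * ContinuousMap.const Q d) q = _
      rw [hD]
      rfl
    · simp [δ, h1]
    · simp [δ, h2]
  have hΔ : ∀ x q, Δ x q = δ q (x q) := fun x q => by
    obtain ⟨D, hD, h1, h2⟩ := h2local x (ContinuousMap.const Q (x q))
    have := deriv_apply_eq_zero D hD (x - ContinuousMap.const Q (x q)) q (by simp)
    rw [map_sub, h1, h2] at this
    exact sub_eq_zero.mp this
  refine ⟨fun x y => ?_, fun c x => map_smul' h2local c x, fun x y => ?_⟩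
  · ext1 q
    simp only [ContinuousMap.add_apply, hΔ]
    exact TwoLocal.map_add' minSeparating (hδ q) _ _
  · ext1 q
    simp only [ContinuousMap.add_apply, ContinuousMap.mul_apply, hΔ]
    exact leibniz minSeparating (hδ q) _ _
end

section
/- Let Q be a compact Hausdorff topological space and let H be an infinite-dimensional complex Hilbert space. Then every 2-local derivation Δ on the algebra C(Q, B(H)) of continuous B(H)-valued functions on Q is additive: Δ(x + y) = Δ(x) + Δ(y) for all x, y ∈ C(Q, B(H)). -/
/-!
The proof is a trace argument in which the trace is replaced by compression with rank-one
projections, so it needs no description of the derivations as inner ones.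

* A derivation `D` of `C(Q, A)` is local: if `x q = 0`, then `x = f * g` with `f q = g q = 0`,
  so the Leibniz rule gives `D x q = 0` (`derivation_apply_eq_zero`).
* Let `P` be the constant function whose value is the orthogonal projection onto `ℂ v`, with
  `‖v‖ = 1`. Then `P D(P) P = 0`, and at each point `q` the element `P x P` agrees with `c • P`
  for a scalar `c`. By locality, `P D(P x P) P` vanishes at `q`, and expanding `D(P x P)` yields
  `P D(x) P = -(P D(P) x P + P x D(P) P)` (`compression_derivation`).
* For a 2-local derivation `Δ`, a derivation that agrees with `Δ` at both `x` and `P` turns this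
  into `P Δ(x) P = -(P Δ(P) x P + P x Δ(P) P)`, whose right side is additive in `x`.
  Hence `⟪v, (Δ(x + y) - Δ x - Δ y)(q) v⟫ = 0` for all `v` and `q`, and over `ℂ` an operator with
  vanishing quadratic form is zero.
-/

open scoped InnerProductSpace

lemma continuous_inv_sqrt_norm_smul {A : Type*} [NormedAddCommGroup A] [NormedSpace ℂ A] :
    Continuous fun v : A => ((√‖v‖ : ℝ) : ℂ)⁻¹ • v := by
  rw [continuous_iff_continuousAt]
  intro v
  by_cases hv : v = 0
  · subst hv
    have h : Filter.Tendsto (fun w : A => √‖w‖) (nhds 0) (nhds 0) := by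
      have : Continuous fun w : A => √‖w‖ := by fun_prop
      simpa using this.tendsto 0
    unfold ContinuousAt
    beta_reduce
    rw [smul_zero, tendsto_zero_iff_norm_tendsto_zero]
    refine h.congr fun w => ?_
    rw [norm_smul, norm_inv, Complex.norm_real, Real.norm_of_nonneg (Real.sqrt_nonneg _),
      inv_mul_eq_div, Real.div_sqrt]
  · have h0 : ((√‖v‖ : ℝ) : ℂ) ≠ 0 := by
      simpa [Real.sqrt_eq_zero] using hv
    have h1 : ContinuousAt (fun w : A => ((√‖w‖ : ℝ) : ℂ)) v := by fun_prop
    exact (h1.inv₀ h0).smul continuousAt_id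

/-- Derivations of `C(Q, A)` are local: `x = (√‖x‖ • 1) * (√‖x‖⁻¹ • x)` writes a function vanishing
at `q` as a product of two such functions. -/
lemma derivation_apply_eq_zero {Q A : Type*} [TopologicalSpace Q] [NormedRing A] [NormedAlgebra ℂ A]
    (D : C(Q, A) →ₗ[ℂ] C(Q, A)) (hD : ∀ a b, D (a * b) = D a * b + a * D b)
    (x : C(Q, A)) (q : Q) (hx : x q = 0) : D x q = 0 := by
  let f : C(Q, A) := ⟨fun z => ((√‖x z‖ : ℝ) : ℂ) • (1 : A), by fun_prop⟩
  let g : C(Q, A) :=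
    ⟨fun z => ((√‖x z‖ : ℝ) : ℂ)⁻¹ • x z, continuous_inv_sqrt_norm_smul.comp x.continuous⟩
  have hfg : x = f * g := by
    ext z
    by_cases hz : x z = 0
    · simp [f, g, hz]
    · have h0 : ((√‖x z‖ : ℝ) : ℂ) ≠ 0 := by
        simpa [Real.sqrt_eq_zero] using hz
      change x z = (((√‖x z‖ : ℝ) : ℂ) • (1 : A)) * (((√‖x z‖ : ℝ) : ℂ)⁻¹ • x z)
      rw [smul_mul_assoc, one_mul, smul_smul, mul_inv_cancel₀ h0, one_smul]
  have hf : f q = 0 := by simp [f, hx]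
  have hg : g q = 0 := by simp [g, hx]
  rw [hfg, hD]
  simp [hf, hg]

/-- The hypothesis `hc` says that `P` behaves at `q` like a rank-one projection. -/
lemma compression_derivation {Q A : Type*} [TopologicalSpace Q] [NormedRing A] [NormedAlgebra ℂ A]
    (D : C(Q, A) →ₗ[ℂ] C(Q, A)) (hD : ∀ a b, D (a * b) = D a * b + a * D b)
    (P x : C(Q, A)) (q : Q) (c : ℂ) (hP : P * P = P) (hc : P q * x q * P q = c • P q) :
    P q * D x q * P q = -(P q * D P q * x q * P q + P q * x q * D P q * P q) := by
  have hPq : P q * P q = P q := congrArg (fun f : C(Q, A) => f q) hP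
  have hPDP : P q * D P q * P q = 0 := by
    have h : D P q = D P q * P q + P q * D P q :=
      congrArg (fun f : C(Q, A) => f q) ((congrArg D hP).symm.trans (hD P P))
    have h2 : P q * D P q * P q = P q * (D P q * P q + P q * D P q) * P q := by rw [← h]
    have h3 : P q * (D P q * P q + P q * D P q) * P q
        = P q * D P q * (P q * P q) + (P q * P q) * D P q * P q := by noncomm_ring
    rw [h3, hPq] at h2
    exact left_eq_add.mp h2
  have hloc : D (P * x * P) q = c • D P q := by
    have h := derivation_apply_eq_zero D hD (P * x * P - c • P) q (by simp [hc])
    rw [map_sub, map_smul] at h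
    simpa [sub_eq_zero] using h
  have hexp : D (P * x * P) q = (D P q * x q + P q * D x q) * P q + P q * x q * D P q := by
    rw [hD, hD]; rfl
  rw [hexp] at hloc
  have h4 : P q * ((D P q * x q + P q * D x q) * P q + P q * x q * D P q) * P q = 0 := by
    rw [hloc, mul_smul_comm, smul_mul_assoc, hPDP, smul_zero]
  have h5 : P q * ((D P q * x q + P q * D x q) * P q + P q * x q * D P q) * P q
      = P q * D P q * x q * (P q * P q) + (P q * P q) * D x q * (P q * P q)
        + (P q * P q) * x q * D P q * P q := by noncomm_ring
  rw [h5, hPq] at h4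
  rw [eq_neg_iff_add_eq_zero, ← h4]
  abel

/-- Every 2-local derivation on the algebra `C(Q, B(H))` of continuous
`B(H)`-valued functions on a compact Hausdorff space `Q`, where `H` is an
infinite-dimensional complex Hilbert space, is additive. -/
theorem two_local_derivation_on_continuous_BH_valued_functions_is_additive
    (Q : Type*) [TopologicalSpace Q] [CompactSpace Q] [T2Space Q]
    (H : Type*) [NormedAddCommGroup H] [InnerProductSpace ℂ H] [CompleteSpace H]
    (hH : ¬ FiniteDimensional ℂ H)
    (Δ : C(Q, H →L[ℂ] H) → C(Q, H →L[ℂ] H))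
    (h2local : ∀ x y : C(Q, H →L[ℂ] H),
      ∃ D : C(Q, H →L[ℂ] H) →ₗ[ℂ] C(Q, H →L[ℂ] H),
        (∀ a b, D (a * b) = D a * b + a * D b) ∧ D x = Δ x ∧ D y = Δ y) :
    ∀ x y, Δ (x + y) = Δ x + Δ y := by
  intro x y
  ext1 q
  rw [ContinuousMap.add_apply]
  set E : H →L[ℂ] H := Δ (x + y) q - (Δ x q + Δ y q) with hE
  suffices hunit : ∀ v : H, ‖v‖ = 1 → ⟪v, E v⟫_ℂ = 0 by
    have hall : ∀ v : H, ⟪E v, v⟫_ℂ = 0 := by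
      intro v
      by_cases hv : v = 0
      · simp [hv]
      · have h := hunit (((‖v‖ : ℝ) : ℂ)⁻¹ • v) (by simp [norm_smul, hv])
        rw [map_smul, inner_smul_left, inner_smul_right] at h
        have h' : ⟪v, E v⟫_ℂ = 0 := by simpa [hv] using h
        rw [← inner_conj_symm, h', map_zero]
    have h0 : (E : H →ₗ[ℂ] H) = 0 := inner_map_self_eq_zero _ |>.mp hall
    exact sub_eq_zero.mp (ContinuousLinearMap.coe_injective h0)
  intro v hv
  have hvv : ⟪v, v⟫_ℂ = 1 := by simp [inner_self_eq_norm_sq_to_K, hv]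
  let p : H →L[ℂ] H := (innerSL ℂ v).smulRight v
  have hp : ∀ w, p w = ⟪v, w⟫_ℂ • v := fun w => rfl
  let P : C(Q, H →L[ℂ] H) := ContinuousMap.const Q p
  have hPq : P q = p := rfl
  have hPP : P * P = P := by
    ext z w
    change p (p w) = p w
    simp only [hp, hvv, inner_smul_right, mul_one]
  have hpap : ∀ a : H →L[ℂ] H, p * a * p = ⟪v, a v⟫_ℂ • p := by
    intro a
    ext w
    change p (a (p w)) = ⟪v, a v⟫_ℂ • p w
    simp only [hp, map_smul, inner_smul_right, smul_smul]
    rw [mul_comm]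
  have key : ∀ z : C(Q, H →L[ℂ] H),
      p * Δ z q * p = -(p * Δ P q * z q * p + p * z q * Δ P q * p) := by
    intro z
    obtain ⟨D, hD, hz, hDP⟩ := h2local z P
    have h := compression_derivation D hD P z q _ hPP (hpap (z q))
    rwa [hz, hDP, hPq] at h
  have hpEp : p * E * p = 0 := by
    rw [hE, mul_sub, mul_add, sub_mul, add_mul, key, key, key, ContinuousMap.add_apply]
    noncomm_ring
  have h := congrArg (fun a : H →L[ℂ] H => ⟪v, a v⟫_ℂ) ((hpap E).symm.trans hpEp)
  simpa [hp, hv, norm_ne_zero_iff.mp (hv.trans_ne one_ne_zero)] using h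
end
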